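/- Let (A, m) be a regular local ring of dimension n ≥ 2, let f₁, …, f_{n−1} ∈ m be a regular sequence, and set I = (f₁, …, f_{n−1}). Then for every integer r ≥ 2, the A-module A/(I^r + (f₁^{r−1})) has depth equal to 1. -/

import Mathlib

/-- The depth (with respect to the ideal `m`) of an `A`-module `M`: the supremum of the
lengths of `M`-regular sequences consisting of elements of `m`.  For a nonzero finitely
generated module over a Noetherian local ring this is the common length of all maximal
`M`-regular sequences contained in the maximal ideal. -/
noncomputable def regSeqDepth (A : Type*) [CommRing A] (m : Ideal A)
    (M : Type*) [AddCommGroup M] [Module A M] : ℕ :=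
  sSup {d : ℕ | ∃ rs : List A, rs.length = d ∧ (∀ x ∈ rs, x ∈ m) ∧
    RingTheory.Sequence.IsRegular M rs}

/-!
Let `I` be generated by an `M`-regular sequence `fs`, let `f` be one of its terms, and let
`J = I ^ r + (f ^ t)`. If `x` extends `fs` to a longer regular sequence, then `x` is a
nonzerodivisor on `M ⧸ J M`: writing `I = (f) + I'`, one has `J = I' ^ r + f J'` with
`J' = I ^ (r - 1) + (f ^ (t - 1))`, and `f` embeds `M ⧸ J' M` into `M ⧸ J M` with cokernel
`M ⧸ (f, I' ^ r) M`, so one inducts on `t` and on the length of `fs`.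

If `M` is Cohen–Macaulay, Rees' theorem extends `fs` by some `xs` to a regular sequence of length
`dim M`, and `xs` is then regular on `M ⧸ J M`. As `I` and `J` have the same radical,
`dim (M ⧸ J M) = dim M - |fs| = |xs|`, which is therefore also the depth. This applies to regular
local rings, which are seen to be Cohen–Macaulay by killing elements of `𝔪 ∖ 𝔪 ^ 2` that lie in no
minimal prime.
-/

section PowersOfRegularSequences

open RingTheory.Sequence IsLocalRing Pointwise

variable {A : Type*} [CommRing A] {M : Type*} [AddCommGroup M] [Module A M]

theorem mem_maximalIdeal_of_isRegular [IsLocalRing A] {rs : List A} (h : IsRegular M rs) {x : A}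
    (hx : x ∈ rs) : x ∈ maximalIdeal A := by
  have hne : Ideal.ofList rs ≠ ⊤ := fun htop => h.top_ne_smul (by rw [htop, Submodule.top_smul])
  exact le_maximalIdeal hne (Ideal.subset_span hx)

theorem isRegular_of_isRegular_append {rs₁ rs₂ : List A} (h : IsRegular M (rs₁ ++ rs₂)) :
    IsRegular M rs₁ where
  toIsWeaklyRegular := ((isWeaklyRegular_append_iff M rs₁ rs₂).mp h.toIsWeaklyRegular).1
  top_ne_smul htop := h.top_ne_smul <| (top_le_iff.mp <| htop.le.trans <|
    Submodule.smul_mono_left <| by simp only [Ideal.ofList_append, le_sup_left]).symm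

theorem sup_pow_succ_eq (I J : Ideal A) (r : ℕ) :
    (J ⊔ I) ^ (r + 1) = I ^ (r + 1) ⊔ J * (J ⊔ I) ^ r := by
  induction r with
  | zero => simp [sup_comm]
  | succ r ih =>
    have hcross : I * (J * (J ⊔ I) ^ r) ≤ J * (J ⊔ I) ^ (r + 1) := by
      rw [mul_left_comm, pow_succ']
      exact Ideal.mul_mono_right (Ideal.mul_mono_left le_sup_right)
    calc (J ⊔ I) ^ (r + 2)
        = J * (J ⊔ I) ^ (r + 1) ⊔ I * (J ⊔ I) ^ (r + 1) := by rw [pow_succ', Ideal.sup_mul]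
      _ = J * (J ⊔ I) ^ (r + 1) ⊔ (I ^ (r + 2) ⊔ I * (J * (J ⊔ I) ^ r)) := by
        conv_lhs => enter [2]; rw [ih, Ideal.mul_sup, ← pow_succ']
      _ = I ^ (r + 2) ⊔ J * (J ⊔ I) ^ (r + 1) := by
        rw [sup_left_comm, sup_eq_left.mpr hcross]

theorem span_singleton_sup_pow_sup_smul_top (I : Ideal A) (f : A) (r t : ℕ) :
    ((Ideal.span {f} ⊔ I) ^ (r + 1) ⊔ Ideal.span {f ^ (t + 1)}) • (⊤ : Submodule A M) =
      I ^ (r + 1) • ⊤ ⊔ f • (((Ideal.span {f} ⊔ I) ^ r ⊔ Ideal.span {f ^ t}) • ⊤) := by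
  rw [← Submodule.ideal_span_singleton_smul, ← mul_smul, ← Submodule.sup_smul, sup_pow_succ_eq,
    Ideal.mul_sup, Ideal.span_singleton_mul_span_singleton, pow_succ' f, sup_assoc]

-- Multiplication by `f` makes `0 → M ⧸ N → M ⧸ (K ⊔ f • N) → M ⧸ (K ⊔ f • ⊤) → 0` exact.
theorem isSMulRegular_quotient_sup_smul {K N : Submodule A M} (hKN : K ≤ N) {f x : A}
    (hf : IsSMulRegular (M ⧸ K) f) (hx : IsSMulRegular (M ⧸ (K ⊔ f • (⊤ : Submodule A M))) x)
    (hxN : IsSMulRegular (M ⧸ N) x) : IsSMulRegular (M ⧸ (K ⊔ f • N)) x := by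
  refine (isSMulRegular_quotient_iff_mem_of_smul_mem _ _).mpr fun a hxa => ?_
  have hle : K ⊔ f • N ≤ K ⊔ f • ⊤ := sup_le_sup_left (smul_mono_right f le_top) K
  have ha := mem_of_isSMulRegular_quotient_of_smul_mem hx (hle hxa)
  obtain ⟨k, hk, _, ⟨b, -, rfl⟩, rfl⟩ := Submodule.mem_sup.mp ha
  obtain ⟨k', hk', _, ⟨c, hc, rfl⟩, hsum⟩ := Submodule.mem_sup.mp hxa
  simp only [DistribSMul.toLinearMap_apply] at hsum ⊢
  have hfK : f • (x • b - c) ∈ K := by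
    have : f • (x • b - c) = k' - x • k := by
      rw [smul_sub, smul_comm f x b, sub_eq_sub_iff_add_eq_add, hsum, smul_add, add_comm]
    exact this ▸ K.sub_mem hk' (K.smul_mem x hk)
  have hxb : x • b ∈ N :=
    (N.sub_mem_iff_left hc).mp (hKN (mem_of_isSMulRegular_quotient_of_smul_mem hf hfK))
  exact Submodule.add_mem_sup hk <| Submodule.smul_mem_pointwise_smul _ _ _ <|
    mem_of_isSMulRegular_quotient_of_smul_mem hxN hxb

theorem isSMulRegular_quotient_span_sup_pow_sup {I : Ideal A} {f x : A}
    (hf : ∀ r : ℕ, IsSMulRegular (M ⧸ I ^ r • (⊤ : Submodule A M)) f)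
    (hx : ∀ r : ℕ, IsSMulRegular (M ⧸ (Ideal.span {f} ⊔ I ^ r) • (⊤ : Submodule A M)) x)
    (r t : ℕ) :
    IsSMulRegular
      (M ⧸ ((Ideal.span {f} ⊔ I) ^ r ⊔ Ideal.span {f ^ t}) • (⊤ : Submodule A M)) x := by
  induction t generalizing r with
  | zero => exact (isSMulRegular_quotient_iff_mem_of_smul_mem _ _).mpr (by simp)
  | succ t ih =>
    cases r with
    | zero => exact (isSMulRegular_quotient_iff_mem_of_smul_mem _ _).mpr (by simp)
    | succ r =>
      have hle : I ^ (r + 1) ≤ (Ideal.span {f} ⊔ I) ^ r ⊔ Ideal.span {f ^ t} :=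
        (Ideal.pow_le_pow_right r.le_succ).trans <|
          (Ideal.pow_right_mono le_sup_right r).trans le_sup_left
      have hxr := hx (r + 1)
      rw [Submodule.sup_smul, Submodule.ideal_span_singleton_smul, sup_comm] at hxr
      rw [span_singleton_sup_pow_sup_smul_top]
      exact isSMulRegular_quotient_sup_smul (Submodule.smul_mono_left hle) (hf _) hxr (ih r)

variable (M) in
/-- The isomorphism `(M ⧸ xM) ⧸ I(M ⧸ xM) ≃ M ⧸ (x, I)M`. -/
def quotSMulTopQuotientEquiv (x : A) (I : Ideal A) :
    (QuotSMulTop x M ⧸ I • (⊤ : Submodule A (QuotSMulTop x M))) ≃ₗ[A]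
      M ⧸ (Ideal.span {x} ⊔ I) • (⊤ : Submodule A M) :=
  Submodule.quotEquivOfEq _ _ (by
      rw [Submodule.map_smul'', Submodule.map_top, Submodule.range_mkQ]) ≪≫ₗ
    Submodule.quotientQuotientEquivQuotientSup (x • ⊤) (I • ⊤) ≪≫ₗ
      Submodule.quotEquivOfEq _ _ (by rw [Submodule.sup_smul, Submodule.ideal_span_singleton_smul])

variable (M) in
/-- The isomorphism `(M ⧸ IM) ⧸ x(M ⧸ IM) ≃ M ⧸ (x, I)M`. -/
def quotSMulTopOfQuotientEquiv (x : A) (I : Ideal A) :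
    QuotSMulTop x (M ⧸ I • (⊤ : Submodule A M)) ≃ₗ[A]
      M ⧸ (Ideal.span {x} ⊔ I) • (⊤ : Submodule A M) :=
  Submodule.quotEquivOfEq _ _ (by
      rw [Submodule.map_pointwise_smul, Submodule.map_top, Submodule.range_mkQ]) ≪≫ₗ
    Submodule.quotientQuotientEquivQuotientSup (I • ⊤) (x • ⊤) ≪≫ₗ
      Submodule.quotEquivOfEq _ _ (by
        rw [sup_comm, Submodule.sup_smul, Submodule.ideal_span_singleton_smul])

variable [IsNoetherianRing A] [IsLocalRing A] [Module.Finite A M]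

theorem isRegular_and_isRegular_quotSMulTop_of_cons_cons {x f : A} {fs : List A}
    (h : IsRegular M (x :: f :: fs)) :
    IsRegular M (f :: fs) ∧ IsRegular (QuotSMulTop f M) (x :: fs) :=
  ⟨isRegular_of_isRegular_append (isRegular_of_perm h (List.perm_append_singleton x _).symm),
    ((isRegular_cons_iff M f _).mp (isRegular_of_perm h (List.Perm.swap f x fs))).2⟩

theorem isSMulRegular_quotient_ofList_pow {x : A} {fs : List A} (h : IsRegular M (x :: fs))
    (r : ℕ) : IsSMulRegular (M ⧸ Ideal.ofList fs ^ r • (⊤ : Submodule A M)) x := by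
  induction fs generalizing M x r with
  | nil =>
    rcases r.eq_zero_or_pos with rfl | hr
    · exact (isSMulRegular_quotient_iff_mem_of_smul_mem _ _).mpr (by simp)
    · rw [Ideal.ofList_nil, Ideal.bot_pow hr.ne', Submodule.bot_smul]
      exact ((Submodule.quotEquivOfEqBot _ rfl).isSMulRegular_congr x).mpr
        ((isRegular_cons_iff M x []).mp h).1
  | cons f fs ih =>
    obtain ⟨hf, hx⟩ := isRegular_and_isRegular_quotSMulTop_of_cons_cons h
    have hpow : Ideal.span {f ^ r} ≤ (Ideal.span {f} ⊔ Ideal.ofList fs) ^ r := by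
      rw [← Ideal.span_singleton_pow]
      exact Ideal.pow_right_mono le_sup_left r
    rw [Ideal.ofList_cons, ← sup_eq_left.mpr hpow]
    exact isSMulRegular_quotient_span_sup_pow_sup (ih hf)
      (fun k => ((quotSMulTopQuotientEquiv M f _).isSMulRegular_congr x).mp (ih hx k)) r r

theorem isSMulRegular_quotient_ofList_pow_sup {x f : A} {fs : List A} (h : IsRegular M (x :: fs))
    (hf : f ∈ fs) (r t : ℕ) :
    IsSMulRegular (M ⧸ (Ideal.ofList fs ^ r ⊔ Ideal.span {f ^ t}) • (⊤ : Submodule A M)) x := by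
  classical
  have hperm : fs.Perm (f :: fs.erase f) := List.perm_cons_erase hf
  have hofList : Ideal.ofList fs = Ideal.span {f} ⊔ Ideal.ofList (fs.erase f) := by
    rw [← Ideal.ofList_cons]
    exact congrArg Ideal.span (Set.ext fun _ => hperm.mem_iff)
  obtain ⟨hfrest, hxrest⟩ :=
    isRegular_and_isRegular_quotSMulTop_of_cons_cons (isRegular_of_perm h (hperm.cons x))
  rw [hofList]
  exact isSMulRegular_quotient_span_sup_pow_sup (isSMulRegular_quotient_ofList_pow hfrest)
    (fun k => ((quotSMulTopQuotientEquiv M f _).isSMulRegular_congr x).mp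
      (isSMulRegular_quotient_ofList_pow hxrest k)) r t

theorem isWeaklyRegular_quotient_ofList_pow_sup {f : A} {fs xs : List A}
    (h : IsRegular M (fs ++ xs)) (hf : f ∈ fs) (r t : ℕ) :
    IsWeaklyRegular (M ⧸ (Ideal.ofList fs ^ r ⊔ Ideal.span {f ^ t}) • (⊤ : Submodule A M)) xs := by
  induction xs generalizing M with
  | nil => exact IsWeaklyRegular.nil A _
  | cons x xs ih =>
    have hx : IsRegular M (x :: (fs ++ xs)) := isRegular_of_perm h List.perm_middle
    refine IsWeaklyRegular.cons
      (isSMulRegular_quotient_ofList_pow_sup (isRegular_of_isRegular_append hx) hf r t) ?_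
    exact ((quotSMulTopQuotientEquiv M x _ ≪≫ₗ
      (quotSMulTopOfQuotientEquiv M x _).symm).isWeaklyRegular_congr xs).mp
        (ih ((isRegular_cons_iff M x _).mp hx).2)

end PowersOfRegularSequences

section CohenMacaulay

open RingTheory.Sequence IsLocalRing

/-- A Cohen–Macaulay module: some regular sequence on `M` is as long as the dimension of the
support of `M`. The zero module is excluded, since no sequence is regular on it. -/
def IsCohenMacaulayModule (A M : Type*) [CommRing A] [AddCommGroup M] [Module A M] : Prop :=
  ∃ rs : List A, IsRegular M rs ∧ Module.supportDim A M = rs.length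

section Extension

universe u v

variable {A : Type u} [CommRing A] [IsNoetherianRing A] [IsLocalRing A] [Small.{v} A]
  {M : Type v} [AddCommGroup M] [Module A M] [Module.Finite A M]

open CategoryTheory Abelian in
-- By Rees' theorem the lengths of regular sequences are read off from the vanishing of
-- `Ext (A ⧸ 𝔪) M`, and passing to `M ⧸ xM` lowers the range of vanishing by at most one.
theorem exists_isRegular_quotSMulTop {x : A} (hx : IsSMulRegular M x) (hxm : x ∈ maximalIdeal A)
    {rs : List A} (hrs : IsRegular M rs) {n : ℕ} (hlen : rs.length = n + 1) :
    ∃ ys : List A, ys.length = n ∧ IsRegular (QuotSMulTop x M) ys := by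
  have smul_lt (N : Type v) [AddCommGroup N] [Module A N] [Module.Finite A N] [Nontrivial N] :
      maximalIdeal A • (⊤ : Submodule A N) < ⊤ :=
    (Submodule.top_ne_ideal_smul_of_le_jacobson_annihilator
      (maximalIdeal_le_jacobson _)).symm.lt_top
  have : Nontrivial M := hrs.nontrivial
  have : Nontrivial (QuotSMulTop x M) := nontrivial_quotSMulTop_of_mem_maximalIdeal M hxm
  have ext_M := ((ModuleCat.exists_isRegular_tfae (maximalIdeal A) (n + 1) (ModuleCat.of A M)
    (smul_lt M)).out 1 3 rfl rfl).mpr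
      ⟨rs, hlen, fun _ hy => mem_maximalIdeal_of_isRegular hrs hy, hrs⟩
  obtain ⟨ys, hys, -, hreg⟩ := ((ModuleCat.exists_isRegular_tfae (maximalIdeal A) n
    (ModuleCat.of A (QuotSMulTop x M)) (smul_lt _)).out 1 3 rfl rfl).mp fun i hi => by
      have hi₀ := AddCommGrpCat.isZero_of_iff_subsingleton.mpr (ext_M i (by omega))
      have hi₁ := AddCommGrpCat.isZero_of_iff_subsingleton.mpr (ext_M (i + 1) (by omega))
      exact AddCommGrpCat.subsingleton_of_isZero <| ShortComplex.Exact.isZero_of_both_zeros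
        (Ext.covariant_sequence_exact₃' _
          (IsSMulRegular.smulShortComplex_shortExact (M := ModuleCat.of A M) hx) i (i + 1) rfl)
        (hi₀.eq_zero_of_src _) (hi₁.eq_zero_of_tgt _)
  exact ⟨ys, hys, hreg⟩

theorem exists_isRegular_append {fs rs : List A} (hfs : IsRegular M fs) (hrs : IsRegular M rs)
    (hlen : fs.length ≤ rs.length) :
    ∃ xs : List A, IsRegular M (fs ++ xs) ∧ (fs ++ xs).length = rs.length := by
  induction fs generalizing M rs with
  | nil => exact ⟨rs, hrs, rfl⟩
  | cons f fs ih =>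
    obtain ⟨hf, hfs'⟩ := (isRegular_cons_iff M f fs).mp hfs
    obtain ⟨n, hn⟩ : ∃ n, rs.length = n + 1 := ⟨rs.length - 1, by grind⟩
    obtain ⟨ys, hys, hreg⟩ := exists_isRegular_quotSMulTop hf
      (mem_maximalIdeal_of_isRegular hfs List.mem_cons_self) hrs hn
    obtain ⟨xs, hxs, hlen'⟩ := ih hfs' hreg (by grind)
    exact ⟨xs, (isRegular_cons_iff M f _).mpr ⟨hf, hxs⟩, by grind⟩

end Extension

section Depth

variable {A M : Type*} [CommRing A] [IsNoetherianRing A] [IsLocalRing A] [AddCommGroup M]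
  [Module A M] [Module.Finite A M]

theorem length_le_supportDim_of_isRegular {rs : List A} (h : IsRegular M rs) :
    (rs.length : WithBot ℕ∞) ≤ Module.supportDim A M := by
  have : Nontrivial (M ⧸ Ideal.ofList rs • (⊤ : Submodule A M)) := h.quot_ofList_smul_nontrivial ⊤
  have : Nonempty (Module.support A (M ⧸ Ideal.ofList rs • (⊤ : Submodule A M))) :=
    Module.nonempty_support_of_nontrivial.to_subtype
  rw [← Module.supportDim_add_length_eq_supportDim_of_isRegular rs h]
  exact le_add_of_nonneg_left Order.krullDim_nonneg

theorem IsCohenMacaulayModule.regSeqDepth_eq (hM : IsCohenMacaulayModule A M) :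
    (regSeqDepth A (maximalIdeal A) M : WithBot ℕ∞) = Module.supportDim A M := by
  obtain ⟨rs, hrs, hdim⟩ := hM
  have hgreatest : IsGreatest {d : ℕ | ∃ rs : List A, rs.length = d ∧
      (∀ x ∈ rs, x ∈ maximalIdeal A) ∧ IsRegular M rs} rs.length := by
    refine ⟨⟨rs, rfl, fun _ hx => mem_maximalIdeal_of_isRegular hrs hx, hrs⟩, ?_⟩
    rintro _ ⟨ys, rfl, -, hys⟩
    exact_mod_cast hdim ▸ length_le_supportDim_of_isRegular hys
  rw [hdim, regSeqDepth, hgreatest.csSup_eq]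

theorem supportDim_quotient_ofList_pow_sup_add_length {fs : List A} (hfs : IsRegular M fs) {f : A}
    (hf : f ∈ fs) {r t : ℕ} (hr : r ≠ 0) (ht : t ≠ 0) :
    Module.supportDim A
        (M ⧸ (Ideal.ofList fs ^ r ⊔ Ideal.span {f ^ t}) • (⊤ : Submodule A M)) + fs.length =
      Module.supportDim A M := by
  have hfI : f ∈ Ideal.ofList fs := Ideal.subset_span hf
  have hle : Ideal.ofList fs ^ r ⊔ Ideal.span {f ^ t} ≤ Ideal.ofList fs :=
    sup_le (Ideal.pow_le_self hr) <| (Ideal.span_singleton_le_iff_mem _).mpr <|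
      Ideal.pow_mem_of_mem _ hfI t (Nat.pos_of_ne_zero ht)
  have hzero : PrimeSpectrum.zeroLocus (Ideal.ofList fs ^ r ⊔ Ideal.span {f ^ t} : Ideal A) =
      PrimeSpectrum.zeroLocus (Ideal.ofList fs : Set A) := by
    refine (PrimeSpectrum.zeroLocus_anti_mono_ideal hle).antisymm' ?_
    rw [← PrimeSpectrum.zeroLocus_pow (Ideal.ofList fs) hr]
    exact PrimeSpectrum.zeroLocus_anti_mono_ideal le_sup_left
  rw [← Module.supportDim_add_length_eq_supportDim_of_isRegular fs hfs, Module.supportDim,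
    Module.supportDim, Module.support_quotient, Module.support_quotient, hzero]

end Depth

universe u v in
theorem IsCohenMacaulayModule.quotient_ofList_pow_sup {A : Type u} [CommRing A]
    [IsNoetherianRing A] [IsLocalRing A] [Small.{v} A] {M : Type v} [AddCommGroup M] [Module A M]
    [Module.Finite A M] (hM : IsCohenMacaulayModule A M) {fs : List A} (hfs : IsRegular M fs)
    {f : A} (hf : f ∈ fs) {r t : ℕ} (hr : r ≠ 0) (ht : t ≠ 0) :
    IsCohenMacaulayModule A
      (M ⧸ (Ideal.ofList fs ^ r ⊔ Ideal.span {f ^ t}) • (⊤ : Submodule A M)) := by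
  obtain ⟨rs, hrs, hdim⟩ := hM
  have hlen : fs.length ≤ rs.length := by
    exact_mod_cast hdim ▸ length_le_supportDim_of_isRegular hfs
  obtain ⟨xs, hxs, hlen'⟩ := exists_isRegular_append hfs hrs hlen
  have hdimJ := supportDim_quotient_ofList_pow_sup_add_length hfs hf hr ht
  rw [hdim, ← hlen', List.length_append, add_comm, Nat.cast_add,
    ENat.WithBot.natCast_add_cancel] at hdimJ
  have : Nontrivial
      (M ⧸ (Ideal.ofList fs ^ r ⊔ Ideal.span {f ^ t}) • (⊤ : Submodule A M)) := by
    rw [← Module.supportDim_ne_bot_iff_nontrivial A, hdimJ]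
    exact WithBot.natCast_ne_bot _
  exact ⟨xs, IsRegular.of_isWeaklyRegular_of_mem_maximalIdeal _
    (fun x hx => mem_maximalIdeal_of_isRegular hxs (List.mem_append_right fs hx))
    (isWeaklyRegular_quotient_ofList_pow_sup hxs hf r t), hdimJ⟩

end CohenMacaulay

section RegularLocalRing

open RingTheory.Sequence IsLocalRing Pointwise

universe u

theorem exists_span_insert_erase_eq {A M : Type*} [CommRing A] [IsLocalRing A] [AddCommGroup M]
    [Module A M] [DecidableEq M] {s : Finset M} {x : M}
    (hx : x ∈ Submodule.span A (s : Set M))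
    (hx' : x ∉ maximalIdeal A • Submodule.span A (s : Set M)) :
    ∃ y ∈ s, Submodule.span A (insert x (s.erase y : Set M)) = Submodule.span A s := by
  obtain ⟨c, -, hc⟩ := Submodule.mem_span_finset.mp hx
  obtain ⟨y, hy, hunit⟩ : ∃ y ∈ s, IsUnit (c y) := by
    by_contra! hnonunit
    exact hx' <| hc ▸ Submodule.sum_mem _ fun y hy =>
      Submodule.smul_mem_smul (hnonunit y hy) (Submodule.subset_span hy)
  refine ⟨y, hy, le_antisymm ?_ ?_⟩
  · exact Submodule.span_le.mpr <| Set.insert_subset hx <|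
      (Finset.coe_subset.mpr (s.erase_subset y)).trans Submodule.subset_span
  · have hcy : c y • y = x - ∑ z ∈ s.erase y, c z • z := by
      rw [← hc, ← Finset.add_sum_erase s _ hy, add_sub_cancel_right]
    have hymem : y ∈ Submodule.span A (insert x (s.erase y : Set M)) := by
      rw [← Submodule.smul_mem_iff_of_isUnit _ hunit, hcy]
      exact Submodule.sub_mem _ (Submodule.subset_span (Set.mem_insert x _)) <|
        Submodule.sum_mem _ fun z hz => Submodule.smul_mem _ _ <|
          Submodule.subset_span (Set.mem_insert_of_mem x hz)
    refine Submodule.span_le.mpr fun z hz => ?_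
    rcases eq_or_ne z y with rfl | hne
    · exact hymem
    · exact Submodule.subset_span <| Set.mem_insert_of_mem x <| Finset.mem_erase.mpr ⟨hne, hz⟩

section

variable {A : Type*} [CommRing A]

theorem spanFinrank_maximalIdeal_quotient_succ_le [IsNoetherianRing A] [IsLocalRing A] {x : A}
    [IsLocalRing (A ⧸ Ideal.span {x})] (hx : x ∈ maximalIdeal A) (hx' : x ∉ maximalIdeal A ^ 2) :
    (maximalIdeal (A ⧸ Ideal.span {x})).spanFinrank + 1 ≤ (maximalIdeal A).spanFinrank := by
  classical
  obtain ⟨s, hcard, hspan⟩ :=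
    (IsNoetherian.noetherian (maximalIdeal A)).exists_span_finset_card_eq_spanFinrank
  obtain ⟨y, hy, hxy⟩ := exists_span_insert_erase_eq (hspan.symm ▸ hx)
    (by rwa [hspan, smul_eq_mul, ← pow_two])
  have hmap : Ideal.span (Ideal.Quotient.mk (Ideal.span {x}) '' (s.erase y)) =
      maximalIdeal (A ⧸ Ideal.span {x}) := by
    rw [← map_maximalIdeal_of_surjective _ Ideal.Quotient.mk_surjective, ← hspan, ← hxy,
      Submodule.span_insert, ← Ideal.map_span]
    exact (by rw [Ideal.map_sup, Ideal.map_quotient_self, bot_sup_eq])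
  calc (maximalIdeal (A ⧸ Ideal.span {x})).spanFinrank + 1
      ≤ (Ideal.Quotient.mk (Ideal.span {x}) '' (s.erase y)).ncard + 1 := by
        rw [← hmap]
        exact Nat.succ_le_succ (Submodule.spanFinrank_span_le_ncard_of_finite
          ((s.erase y).finite_toSet.image _))
    _ ≤ (s.erase y).card + 1 := by
        rw [← Set.ncard_coe_finset]
        exact Nat.succ_le_succ (Set.ncard_image_le (s.erase y).finite_toSet)
    _ = (maximalIdeal A).spanFinrank := by rw [Finset.card_erase_add_one hy, hcard]

theorem isLocalRing_quotient_span_singleton [IsLocalRing A] {x : A} (hx : x ∈ maximalIdeal A) :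
    IsLocalRing (A ⧸ Ideal.span {x}) := by
  have : Nontrivial (A ⧸ Ideal.span {x}) :=
    Ideal.Quotient.nontrivial_iff.mpr (Ideal.span_singleton_eq_top.not.mpr hx)
  exact .of_surjective' (Ideal.Quotient.mk (Ideal.span {x})) Ideal.Quotient.mk_surjective

theorem isRegularLocalRing_of_span_eq_maximalIdeal [IsNoetherianRing A] [IsLocalRing A]
    {s : Finset A} (hspan : Ideal.span (s : Set A) = maximalIdeal A)
    (hcard : s.card ≤ ringKrullDim A) : IsRegularLocalRing A := by
  have hrank : (maximalIdeal A).spanFinrank ≤ s.card := by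
    rw [← hspan, ← Set.ncard_coe_finset]
    exact Submodule.spanFinrank_span_le_ncard_of_finite s.finite_toSet
  exact .of_spanFinrank_maximalIdeal_le A (le_trans (mod_cast hrank) hcard)

theorem isRegularLocalRing_quotient_span_singleton [IsRegularLocalRing A] {x : A}
    (hx : x ∈ maximalIdeal A) (hx' : x ∉ maximalIdeal A ^ 2) :
    IsRegularLocalRing (A ⧸ Ideal.span {x}) := by
  have := isLocalRing_quotient_span_singleton hx
  refine IsRegularLocalRing.of_spanFinrank_maximalIdeal_le _ ?_
  have hdim := ringKrullDim_le_ringKrullDim_quotSMulTop_succ hx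
  rw [← Submodule.ideal_span_singleton_smul, smul_eq_mul, Ideal.mul_top,
    ← IsRegularLocalRing.spanFinrank_maximalIdeal] at hdim
  refine ENat.WithBot.add_le_add_one_right_iff.mp (le_trans ?_ hdim)
  exact_mod_cast spanFinrank_maximalIdeal_quotient_succ_le hx hx'

variable [IsNoetherianRing A] [IsLocalRing A]

theorem exists_notMem_sq_notMem_minimalPrimes (hdim : ringKrullDim A ≠ 0) :
    ∃ x ∈ maximalIdeal A, x ∉ maximalIdeal A ^ 2 ∧ ∀ p ∈ minimalPrimes A, x ∉ p := by
  by_contra! hcover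
  obtain ⟨p, rfl | hp, hle⟩ := (Ideal.subset_union_prime_finite (f := id)
    ((minimalPrimes.finite_of_isNoetherianRing A).insert (maximalIdeal A ^ 2))
    (maximalIdeal A ^ 2) (maximalIdeal A ^ 2)
    fun p hp hne _ => (Set.mem_of_mem_insert_of_ne hp hne).1.1).mp fun x hx => by
      by_cases hx' : x ∈ maximalIdeal A ^ 2
      · exact Set.mem_biUnion (Set.mem_insert _ _) hx'
      · obtain ⟨p, hp, hxp⟩ := hcover x hx hx'
        exact Set.mem_biUnion (Set.mem_insert_of_mem _ hp) hxp
  · exact (maximalIdeal_sq_lt_of_ringKrullDim_ne_zero hdim).not_ge hle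
  · have hmin : maximalIdeal A ∈ minimalPrimes A :=
      (hle.antisymm (le_maximalIdeal hp.1.1.ne_top)).symm ▸ hp
    rw [← maximalIdeal_height_eq_ringKrullDim, Ideal.height_eq_zero_iff.mpr hmin] at hdim
    exact hdim rfl

theorem isDomain_of_isPrime_span_singleton {x : A} (hx : x ∈ maximalIdeal A)
    (hprime : (Ideal.span {x}).IsPrime) (hmin : ∀ p ∈ minimalPrimes A, x ∉ p) : IsDomain A := by
  obtain ⟨p, hp, hpx⟩ := Ideal.exists_minimalPrimes_le (bot_le (a := Ideal.span {x}))
  have hpprime : p.IsPrime := hp.1.1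
  have hle : p ≤ maximalIdeal A • p := fun y hy => by
    obtain ⟨z, rfl⟩ := Ideal.mem_span_singleton.mp (hpx hy)
    exact Submodule.smul_mem_smul hx ((hpprime.mem_or_mem hy).resolve_left (hmin p hp))
  have hbot : p = ⊥ := Submodule.eq_bot_of_le_smul_of_le_jacobson_bot (maximalIdeal A) p
    (IsNoetherian.noetherian p) hle (maximalIdeal_le_jacobson _)
  subst hbot
  exact IsDomain.of_bot_isPrime A

theorem isCohenMacaulayModule_self_of_quotient_span_singleton {x : A} (hx : x ∈ maximalIdeal A)
    (hreg : IsSMulRegular A x)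
    (h : IsCohenMacaulayModule (A ⧸ Ideal.span {x}) (A ⧸ Ideal.span {x})) :
    IsCohenMacaulayModule A A := by
  have := isLocalRing_quotient_span_singleton hx
  obtain ⟨rs, hrs, hdim⟩ := h
  obtain ⟨rs, rfl⟩ := List.map_surjective_iff.mpr Ideal.Quotient.mk_surjective rs
  have hmem : ∀ y ∈ x :: rs, y ∈ maximalIdeal A := by
    refine List.forall_mem_cons.mpr ⟨hx, fun y hy hunit => ?_⟩
    exact mem_maximalIdeal_of_isRegular hrs (List.mem_map_of_mem hy) (hunit.map _)
  have hquot : IsWeaklyRegular (A ⧸ Ideal.span {x}) rs :=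
    (isWeaklyRegular_map_algebraMap_iff (A ⧸ Ideal.span {x}) _ rs).mp hrs.toIsWeaklyRegular
  have hspan : Ideal.span {x} = x • (⊤ : Ideal A) := by
    rw [← Submodule.ideal_span_singleton_smul, smul_eq_mul, Ideal.mul_top]
  refine ⟨x :: rs, IsRegular.of_isWeaklyRegular_of_mem_maximalIdeal A hmem <| .cons hreg <|
    ((Submodule.quotEquivOfEq _ _ hspan).isWeaklyRegular_congr rs).mp hquot, ?_⟩
  rw [Module.supportDim_self_eq_ringKrullDim] at hdim ⊢
  rw [← ringKrullDim_quotient_span_singleton_succ_eq_ringKrullDim hreg hx, hdim]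
  simp

end

theorem isRegularLocalRing_induction {motive : (A : Type u) → [CommRing A] → Prop}
    (isField : ∀ (A : Type u) [CommRing A], IsField A → motive A)
    (quotient : ∀ (A : Type u) [CommRing A] [IsRegularLocalRing A] (x : A),
      x ∈ maximalIdeal A → (∀ p ∈ minimalPrimes A, x ∉ p) →
        motive (A ⧸ Ideal.span {x}) → motive A)
    (A : Type u) [CommRing A] [IsRegularLocalRing A] : motive A := by
  induction hn : (maximalIdeal A).spanFinrank using Nat.strong_induction_on generalizing A with
  | h n ih =>
    subst hn
    by_cases hdim : ringKrullDim A = 0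
    · rw [← IsRegularLocalRing.spanFinrank_maximalIdeal, Nat.cast_eq_zero,
        Submodule.spanFinrank_eq_zero_iff_eq_bot (IsNoetherian.noetherian _)] at hdim
      exact isField A (isField_iff_maximalIdeal_eq.mpr hdim)
    · obtain ⟨x, hx, hx', hmin⟩ := exists_notMem_sq_notMem_minimalPrimes hdim
      have := isRegularLocalRing_quotient_span_singleton hx hx'
      exact quotient A x hx hmin
        (ih _ (spanFinrank_maximalIdeal_quotient_succ_le hx hx') (A ⧸ Ideal.span {x}) rfl)

theorem isDomain_of_isRegularLocalRing (A : Type u) [CommRing A] [IsRegularLocalRing A] :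
    IsDomain A := by
  refine isRegularLocalRing_induction (motive := fun A _ => IsDomain A)
    (fun A _ hA => hA.isDomain) (fun A _ _ x hx hmin ih => ?_) A
  exact isDomain_of_isPrime_span_singleton hx ((Ideal.Quotient.isDomain_iff_prime _).mp ih) hmin

theorem isCohenMacaulayModule_self_of_isRegularLocalRing (A : Type u) [CommRing A]
    [IsRegularLocalRing A] : IsCohenMacaulayModule A A := by
  refine isRegularLocalRing_induction (motive := fun A _ => IsCohenMacaulayModule A A)
    (fun A _ hA => ?_) (fun A _ _ x hx hmin ih => ?_) A
  · have := hA.nontrivial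
    exact ⟨[], IsRegular.nil A A, by
      simp [Module.supportDim_self_eq_ringKrullDim, ringKrullDim_eq_zero_of_isField hA]⟩
  · have := isDomain_of_isRegularLocalRing A
    have hx0 : x ≠ 0 := by
      rw [IsDomain.minimalPrimes_eq_singleton_bot] at hmin
      exact hmin ⊥ rfl
    exact isCohenMacaulayModule_self_of_quotient_span_singleton hx
      (IsSMulRegular.of_ne_zero hx0) ih

end RegularLocalRing

section

open RingTheory.Sequence IsLocalRing

universe u v

theorem depth_quotient_power_regular_sequence_eq_one_general {A : Type u} [CommRing A]
    [IsNoetherianRing A] [IsLocalRing A] [Small.{v} A] {M : Type v} [AddCommGroup M] [Module A M]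
    [Module.Finite A M] (hM : IsCohenMacaulayModule A M) {m d : ℕ}
    (hdim : Module.supportDim A M = (m + d : ℕ)) {f : Fin m → A}
    (hf : IsRegular M (List.ofFn f)) (i : Fin m) {r t : ℕ} (hr : r ≠ 0) (ht : t ≠ 0) :
    regSeqDepth A (maximalIdeal A)
      (M ⧸ (Ideal.span (Set.range f) ^ r ⊔ Ideal.span {f i ^ t}) • (⊤ : Submodule A M)) = d := by
  have hi : f i ∈ List.ofFn f := List.mem_ofFn.mpr ⟨i, rfl⟩
  have hofList : Ideal.ofList (List.ofFn f) = Ideal.span (Set.range f) :=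
    congrArg Ideal.span (Set.ext fun _ => List.mem_ofFn)
  have hdepth := supportDim_quotient_ofList_pow_sup_add_length hf hi hr ht
  rw [← (hM.quotient_ofList_pow_sup hf hi hr ht).regSeqDepth_eq, hofList, List.length_ofFn, hdim,
    Nat.cast_add, add_comm, ENat.WithBot.natCast_add_cancel] at hdepth
  exact_mod_cast hdepth

end

/-- if `(A, m)` is a regular local ring of dimension `n = m + 1 ≥ 2`,
`f₁, …, f_{n-1}` is a regular sequence in `m`, and `I = (f₁, …, f_{n-1})`, then for every
`r ≥ 2` the module `A/(I^r + (f₁^{r-1}))` has depth `1`. -/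
theorem depth_quotient_power_regular_sequence_eq_one
    (A : Type*) [CommRing A] [IsNoetherianRing A] [IsLocalRing A]
    (m : ℕ) (hm : 1 ≤ m)
    (hdim : ringKrullDim A = (m + 1 : ℕ))
    (hregular : ∃ s : Finset A, s.card = m + 1 ∧
      Ideal.span (s : Set A) = IsLocalRing.maximalIdeal A)
    (f : Fin m → A) (hfm : ∀ i, f i ∈ IsLocalRing.maximalIdeal A)
    (hf : RingTheory.Sequence.IsRegular A (List.ofFn f))
    (I : Ideal A) (hI : I = Ideal.span (Set.range f))
    (r : ℕ) (hr : 2 ≤ r) :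
    regSeqDepth A (IsLocalRing.maximalIdeal A)
      (A ⧸ (I ^ r ⊔ Ideal.span {f ⟨0, hm⟩ ^ (r - 1)})) = 1 := by
  obtain ⟨s, hcard, hspan⟩ := hregular
  have := isRegularLocalRing_of_span_eq_maximalIdeal hspan (hcard ▸ hdim.ge)
  have hdepth := depth_quotient_power_regular_sequence_eq_one_general
    (isCohenMacaulayModule_self_of_isRegularLocalRing A)
    ((Module.supportDim_self_eq_ringKrullDim A).trans hdim) hf ⟨0, hm⟩ (r := r) (t := r - 1)
    (by omega) (by omega)
  rwa [smul_eq_mul, Ideal.mul_top, ← hI] at hdepth
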